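/- Let F ⊆ R(Q,−k) be a finite set containing exactly one element of each Γ_Q-orbit of R(Q,−k). Then for every t > 0, each set {g ∈ Γ_Q : |(g·y)_{n+1}| ≤ t} (y ∈ F) is finite, and N_t(Q,−k) = Σ_{y∈F} #{g ∈ Γ_Q : |(g·y)_{n+1}| ≤ t} / #Γ_{Q,y}, where Γ_{Q,y} := {g ∈ Γ_Q : g·y = y}. (This is the distance-free form of the identity N_t(Q,−k) = Σ_{y∈F} |Γ_{Q,y}|^{−1} #{g ∈ Γ_Q : d([e_{n+1}], g·[y]) ≤ s}, since cosh d([e_{n+1}], g·[y]) = √(a/k)·|(g·y)_{n+1}| in the hyperbolic metric.) -/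

import Mathlib

open Matrix

/-- The sublevel sets of an integral positive definite quadratic form are finite. -/
theorem finite_setOf_dotProduct_mulVec_le {m : Type*} [Fintype m]
    {S : Matrix m m ℤ} (hS : S.IsSymm)
    (hpos : ∀ x : m → ℤ, x ≠ 0 → 0 < x ⬝ᵥ S *ᵥ x) (C : ℤ) :
    {x : m → ℤ | x ⬝ᵥ S *ᵥ x ≤ C}.Finite := by
  classical
  have hnn (x : m → ℤ) : 0 ≤ x ⬝ᵥ S *ᵥ x := by
    rcases eq_or_ne x 0 with rfl | hx
    · simp
    · exact (hpos x hx).le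
  have hsymm (x y : m → ℤ) : x ⬝ᵥ S *ᵥ y = y ⬝ᵥ S *ᵥ x := by
    rw [dotProduct_mulVec, ← mulVec_transpose, hS.eq, dotProduct_comm]
  have hinj : Function.Injective fun x : m → ℤ => S *ᵥ x := by
    intro x y hxy
    by_contra hne
    have h := hpos (x - y) (sub_ne_zero.mpr hne)
    rw [mulVec_sub, sub_eq_zero.mpr hxy, dotProduct_zero] at h
    exact h.false
  refine Set.Finite.of_finite_image (f := fun x => S *ᵥ x)
    ((Set.finite_Icc (fun i => -(S i i * C)) (fun i => S i i * C)).subset ?_) hinj.injOn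
  rintro _ ⟨x, hx, rfl⟩
  have key (i : m) : |(S *ᵥ x) i| ≤ S i i * C := by
    have hcs := LinearMap.BilinForm.apply_sq_le_of_symm (Matrix.toLinearMap₂' ℤ S)
      (fun y => by simpa [toLinearMap₂'_apply'] using hnn y)
      ⟨fun y z => by simpa [toLinearMap₂'_apply'] using hsymm y z⟩ (Pi.single i 1) x
    simp only [toLinearMap₂'_apply', single_one_dotProduct, mulVec_single_one] at hcs
    have hd : 0 ≤ S i i := by simpa using hnn (Pi.single i 1)
    have hx' : x ⬝ᵥ S *ᵥ x ≤ C := hx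
    have h1 : (S *ᵥ x) i ^ 2 ≤ S i i * C := by
      refine hcs.trans ?_
      exact mul_le_mul_of_nonneg_left hx' hd
    calc |(S *ᵥ x) i| ≤ |(S *ᵥ x) i| ^ 2 := Int.le_self_sq _
      _ = (S *ᵥ x) i ^ 2 := sq_abs _
      _ ≤ _ := h1
  exact ⟨fun i => (abs_le.mp (key i)).1, fun i => (abs_le.mp (key i)).2⟩

section Majorant

variable {m : Type*} [Fintype m] {Q : Matrix m m ℤ}

/-- The quadratic form `-Q[x] Q[v] + 2 (xᵀ Q v)²` in `v`. For a form `Q` of signature `(n, 1)` and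
`x` with `Q[x] < 0` it is a positive definite majorant. -/
def majorant (Q : Matrix m m ℤ) (x : m → ℤ) : Matrix m m ℤ :=
  (-(x ⬝ᵥ Q *ᵥ x)) • Q + (2 : ℤ) • vecMulVec (Q *ᵥ x) (Q *ᵥ x)

theorem isSymm_majorant (hQ : Q.IsSymm) (x : m → ℤ) : (majorant Q x).IsSymm := by
  rw [majorant, IsSymm, transpose_add, transpose_smul, transpose_smul, hQ.eq, transpose_vecMulVec]

theorem dotProduct_majorant_mulVec (x v : m → ℤ) :
    v ⬝ᵥ majorant Q x *ᵥ v =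
      -(x ⬝ᵥ Q *ᵥ x) * (v ⬝ᵥ Q *ᵥ v) + 2 * (v ⬝ᵥ Q *ᵥ x) ^ 2 := by
  simp only [majorant, add_mulVec, smul_mulVec, dotProduct_add, dotProduct_smul, smul_eq_mul,
    vecMulVec_mulVec, op_smul_eq_smul, dotProduct_comm (Q *ᵥ x) v]
  ring

end Majorant

/-- The isometries of the quadratic form `Q` among the invertible integral matrices. -/
def integralIsometries {m : Type*} [Fintype m] [DecidableEq m] (Q : Matrix m m ℤ) :
    Set (Matrix m m ℤ) :=
  {g | IsUnit g.det ∧ gᵀ * Q * g = Q}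

section Isometries

variable {m : Type*} [Fintype m] [DecidableEq m] {Q : Matrix m m ℤ} {g h : Matrix m m ℤ}

theorem dotProduct_mulVec_of_isometry (hg : g ∈ integralIsometries Q) (x y : m → ℤ) :
    (g *ᵥ x) ⬝ᵥ Q *ᵥ (g *ᵥ y) = x ⬝ᵥ Q *ᵥ y := by
  conv_rhs => rw [← hg.2]
  simp only [← mulVec_mulVec]
  rw [dotProduct_mulVec x gᵀ, vecMul_transpose]

theorem mul_mem_integralIsometries (hg : g ∈ integralIsometries Q)
    (hh : h ∈ integralIsometries Q) : g * h ∈ integralIsometries Q := by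
  refine ⟨by rw [det_mul]; exact hg.1.mul hh.1, ?_⟩
  rw [transpose_mul, show hᵀ * gᵀ * Q * (g * h) = hᵀ * (gᵀ * Q * g) * h by
    simp only [Matrix.mul_assoc], hg.2, hh.2]

theorem inv_mem_integralIsometries (hg : g ∈ integralIsometries Q) :
    g⁻¹ ∈ integralIsometries Q := by
  refine ⟨(isUnit_nonsing_inv_det_iff).mpr hg.1, ?_⟩
  have hT : IsUnit gᵀ.det := by rw [det_transpose]; exact hg.1
  conv_lhs => rw [← hg.2]
  rw [transpose_nonsing_inv, Matrix.mul_assoc gᵀ, nonsing_inv_mul_cancel_left _ _ hT,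
    mul_nonsing_inv_cancel_right _ _ hg.1]

/-- The set of isometries carrying `y` to `g y` is a coset of the stabilizer of `y`. -/
theorem ncard_isometries_mulVec_eq (hg : g ∈ integralIsometries Q) (y : m → ℤ) :
    {h ∈ integralIsometries Q | h *ᵥ y = g *ᵥ y}.ncard =
      {h ∈ integralIsometries Q | h *ᵥ y = y}.ncard := by
  have hcancel (u v : Matrix m m ℤ) (huv : g * u = g * v) : u = v := by
    rw [← nonsing_inv_mul_cancel_left g u hg.1, huv, nonsing_inv_mul_cancel_left g v hg.1]
  rw [← Set.ncard_image_of_injective {h ∈ integralIsometries Q | h *ᵥ y = y}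
    (f := fun h => g * h) (fun u v => hcancel u v)]
  congr 1
  ext h
  constructor
  · rintro ⟨hh, hy⟩
    refine ⟨g⁻¹ * h, ⟨mul_mem_integralIsometries (inv_mem_integralIsometries hg) hh, ?_⟩,
      mul_nonsing_inv_cancel_left g h hg.1⟩
    rw [← mulVec_mulVec, hy, mulVec_mulVec, nonsing_inv_mul g hg.1, one_mulVec]
  · rintro ⟨u, ⟨hu, huy⟩, rfl⟩
    exact ⟨mul_mem_integralIsometries hg hu, by rw [← mulVec_mulVec, huy]⟩

/-- Orbit counting: the isometries carrying `y` into `X` number the points of `X` in the orbit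
of `y` times the order of the stabilizer. -/
theorem ncard_isometries_mulVec_mem (y : m → ℤ) {X : Set (m → ℤ)}
    (hX : X.Finite) (hG : {g ∈ integralIsometries Q | g *ᵥ y ∈ X}.Finite) :
    {g ∈ integralIsometries Q | g *ᵥ y ∈ X}.ncard =
      {x ∈ X | ∃ g ∈ integralIsometries Q, g *ᵥ y = x}.ncard *
        {h ∈ integralIsometries Q | h *ᵥ y = y}.ncard := by
  classical
  have hO : {x ∈ X | ∃ g ∈ integralIsometries Q, g *ᵥ y = x}.Finite :=
    hX.subset (Set.sep_subset _ _)
  rw [Set.ncard_eq_toFinset_card _ hG, Set.ncard_eq_toFinset_card _ hO,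
    Finset.card_eq_sum_card_fiberwise (f := fun g => g *ᵥ y) (t := hO.toFinset)]
  · refine Finset.sum_const_nat fun x hx => ?_
    obtain ⟨hxX, g, hg, rfl⟩ := hO.mem_toFinset.mp hx
    rw [← ncard_isometries_mulVec_eq hg, ← Set.ncard_coe_finset]
    congr 1
    ext h
    simp only [Finset.coe_filter, Set.Finite.mem_toFinset, Set.mem_ofPred_eq]
    constructor
    · exact fun hh => ⟨hh.1.1, hh.2⟩
    · exact fun hh => ⟨⟨hh.1, hh.2 ▸ hxX⟩, hh.2⟩
  · intro g hg
    have hg' := hG.mem_toFinset.mp hg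
    exact hO.mem_toFinset.mpr ⟨hg'.2, g, hg'.1, rfl⟩

/-- If the majorant of `Q` at `x` is positive definite, only finitely many isometries carry `y` to `x`. -/
theorem finite_isometries_mulVec_eq (hQ : Q.IsSymm) {x y : m → ℤ}
    (hpos : ∀ v : m → ℤ, v ≠ 0 → 0 < v ⬝ᵥ majorant Q x *ᵥ v) :
    {g ∈ integralIsometries Q | g *ᵥ y = x}.Finite := by
  have hfin := Set.Finite.pi' fun i : m => finite_setOf_dotProduct_mulVec_le
    (isSymm_majorant hQ x) hpos (Pi.single i 1 ⬝ᵥ majorant Q y *ᵥ Pi.single i 1)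
  refine Set.Finite.of_finite_image (f := fun g => gᵀ) (hfin.subset ?_)
    transpose_injective.injOn
  rintro _ ⟨g, ⟨hg, rfl⟩, rfl⟩ i
  have hcol : gᵀ i = g *ᵥ Pi.single i 1 := by rw [mulVec_single_one]; rfl
  simp only [Set.mem_ofPred_eq, hcol, dotProduct_majorant_mulVec,
    dotProduct_mulVec_of_isometry hg, le_refl]

end Isometries

section Lorentzian

variable {n : ℕ} {A : Matrix (Fin n) (Fin n) ℤ} {a : ℤ}

theorem isSymm_fromBlocks_neg (hA : A.IsSymm) (a : ℤ) :
    (fromBlocks A 0 0 (of fun _ _ => -a) : Matrix (Fin n ⊕ Unit) (Fin n ⊕ Unit) ℤ).IsSymm :=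
  hA.fromBlocks (by simp) (by ext; rfl)

theorem dotProduct_fromBlocks_neg_mulVec (x y : Fin n ⊕ Unit → ℤ) :
    x ⬝ᵥ (fromBlocks A 0 0 (of fun _ _ => -a)) *ᵥ y =
      (x ∘ Sum.inl) ⬝ᵥ A *ᵥ (y ∘ Sum.inl) - a * (x (Sum.inr ()) * y (Sum.inr ())) := by
  simp [dotProduct, mulVec]
  ring

theorem finite_setOf_fromBlocks_neg_eq (hA : A.IsSymm)
    (hApos : ∀ x : Fin n → ℤ, x ≠ 0 → 0 < x ⬝ᵥ A *ᵥ x) (ha : 0 < a) (k : ℤ) (t : ℝ) :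
    {x : Fin n ⊕ Unit → ℤ | x ⬝ᵥ (fromBlocks A 0 0 (of fun _ _ => -a)) *ᵥ x = -k ∧
      |(x (Sum.inr ()) : ℝ)| ≤ t}.Finite := by
  have hfin := (finite_setOf_dotProduct_mulVec_le hA hApos (a * ⌊t⌋ ^ 2 - k)).prod
    (Set.finite_Icc (-⌊t⌋) ⌊t⌋)
  refine Set.Finite.of_finite_image (f := fun x => (x ∘ Sum.inl, x (Sum.inr ())))
    (hfin.subset ?_) ?_
  · rintro _ ⟨x, ⟨hx, hxt⟩, rfl⟩
    rw [dotProduct_fromBlocks_neg_mulVec] at hx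
    have h : |x (Sum.inr ())| ≤ ⌊t⌋ := Int.le_floor.mpr (by push_cast; exact hxt)
    have h2 : x (Sum.inr ()) ^ 2 ≤ ⌊t⌋ ^ 2 := by
      rw [← sq_abs]; exact pow_le_pow_left₀ (abs_nonneg _) h 2
    refine ⟨?_, abs_le.mp h⟩
    show (x ∘ Sum.inl) ⬝ᵥ A *ᵥ (x ∘ Sum.inl) ≤ _
    nlinarith
  · intro x _ y _ hxy
    obtain ⟨h1, h2⟩ := Prod.ext_iff.mp hxy
    ext (i | i)
    · exact congrFun h1 i
    · exact h2

theorem majorant_fromBlocks_neg_pos (hA : A.IsSymm)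
    (hApos : ∀ x : Fin n → ℤ, x ≠ 0 → 0 < x ⬝ᵥ A *ᵥ x) (a : ℤ) {x : Fin n ⊕ Unit → ℤ}
    (hx : x ⬝ᵥ (fromBlocks A 0 0 (of fun _ _ => -a)) *ᵥ x < 0)
    {v : Fin n ⊕ Unit → ℤ} (hv : v ≠ 0) :
    0 < v ⬝ᵥ majorant (fromBlocks A 0 0 (of fun _ _ => -a)) x *ᵥ v := by
  rw [dotProduct_majorant_mulVec]
  set s := x (Sum.inr ()) with hs
  set r := v (Sum.inr ()) with hr
  set w : Fin n → ℤ := s • (v ∘ Sum.inl) - r • (x ∘ Sum.inl) with hw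
  have hAnn (u : Fin n → ℤ) : 0 ≤ u ⬝ᵥ A *ᵥ u := by
    rcases eq_or_ne u 0 with rfl | hu
    · simp
    · exact (hApos u hu).le
  have hsymm : (x ∘ Sum.inl) ⬝ᵥ A *ᵥ (v ∘ Sum.inl) = (v ∘ Sum.inl) ⬝ᵥ A *ᵥ (x ∘ Sum.inl) := by
    rw [dotProduct_mulVec, ← mulVec_transpose, hA.eq, dotProduct_comm]
  have hww : w ⬝ᵥ A *ᵥ w = s ^ 2 * ((v ∘ Sum.inl) ⬝ᵥ A *ᵥ (v ∘ Sum.inl))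
      - 2 * s * r * ((v ∘ Sum.inl) ⬝ᵥ A *ᵥ (x ∘ Sum.inl))
      + r ^ 2 * ((x ∘ Sum.inl) ⬝ᵥ A *ᵥ (x ∘ Sum.inl)) := by
    simp only [hw, mulVec_sub, mulVec_smul, dotProduct_sub, sub_dotProduct, smul_dotProduct,
      dotProduct_smul, smul_eq_mul, hsymm]
    ring
  have hs0 : s ≠ 0 := by
    intro h0
    rw [dotProduct_fromBlocks_neg_mulVec, ← hs, h0] at hx
    linarith [hAnn (x ∘ Sum.inl)]
  have hw0 := hAnn w
  simp only [dotProduct_fromBlocks_neg_mulVec, ← hs, ← hr] at hx ⊢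
  generalize hX : (x ∘ Sum.inl) ⬝ᵥ A *ᵥ (x ∘ Sum.inl) = α at *
  generalize hB : (v ∘ Sum.inl) ⬝ᵥ A *ᵥ (x ∘ Sum.inl) = β at *
  generalize hV : (v ∘ Sum.inl) ⬝ᵥ A *ᵥ (v ∘ Sum.inl) = γ at *
  set κ := -(α - a * (s * s)) with hκ
  set b := β - a * (r * s) with hb
  have hκ0 : 0 < κ := by linarith
  have hid : s ^ 2 * (κ * (γ - a * (r * r)) + 2 * b ^ 2) =
      κ * (w ⬝ᵥ A *ᵥ w) + (s * b) ^ 2 + (s * b + κ * r) ^ 2 := by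
    rw [hww, hκ, hb]; ring
  refine pos_of_mul_pos_right (a := s ^ 2) ?_ (sq_nonneg s)
  rw [hid]
  by_contra hle
  have h1 : 0 ≤ κ * (w ⬝ᵥ A *ᵥ w) := mul_nonneg hκ0.le hw0
  have hb0 : s * b = 0 := by
    refine pow_eq_zero_iff two_ne_zero |>.mp ?_
    nlinarith [sq_nonneg (s * b), sq_nonneg (s * b + κ * r)]
  have hr0 : r = 0 := by
    have : s * b + κ * r = 0 := by
      refine pow_eq_zero_iff two_ne_zero |>.mp ?_
      nlinarith [sq_nonneg (s * b), sq_nonneg (s * b + κ * r)]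
    rw [hb0, zero_add] at this
    exact (mul_eq_zero.mp this).resolve_left hκ0.ne'
  have hvl : v ∘ Sum.inl ≠ 0 := by
    intro h
    refine hv (funext ?_)
    rintro (i | i)
    · exact congrFun h i
    · exact hr0
  have hwpos := hApos w (by
    rw [hw, hr0, zero_smul, sub_zero]
    exact smul_ne_zero hs0 hvl)
  have := mul_pos hκ0 hwpos
  nlinarith [sq_nonneg (s * b), sq_nonneg (s * b + κ * r)]

end Lorentzian

/-- Let `F ⊆ R(Q,−k)` be a finite set containing exactly one element of each
`Γ_Q`-orbit of `R(Q,−k)`.  Then for every `t > 0` each set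
`{g ∈ Γ_Q : |(g·y)_{n+1}| ≤ t}` (`y ∈ F`) is finite, and
`N_t(Q,−k) = Σ_{y∈F} #{g ∈ Γ_Q : |(g·y)_{n+1}| ≤ t} / #Γ_{Q,y}`.
Here `Q = diag(A, -a)` with `A` symmetric positive definite over `ℤ` and
`Γ_Q = {g ∈ GL(n+1, ℤ) : gᵀ Q g = Q}`. -/
theorem counting_identity_real (n : ℕ) (hn : 1 ≤ n)
    (A : Matrix (Fin n) (Fin n) ℤ) (hAsymm : A.IsSymm)
    (hApos : ∀ x : Fin n → ℤ, x ≠ 0 → 0 < x ⬝ᵥ A.mulVec x)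
    (a : ℤ) (ha : 0 < a) (k : ℤ) (hk : 0 < k)
    (Q : Matrix (Fin n ⊕ Unit) (Fin n ⊕ Unit) ℤ)
    (hQ : Q = Matrix.fromBlocks A 0 0 (Matrix.of fun _ _ => -a))
    (F : Finset ((Fin n ⊕ Unit) → ℤ))
    (hF1 : ∀ y ∈ F, y ⬝ᵥ Q.mulVec y = -k)
    (hF2 : ∀ x : (Fin n ⊕ Unit) → ℤ, x ⬝ᵥ Q.mulVec x = -k →
      ∃! y : (Fin n ⊕ Unit) → ℤ, y ∈ F ∧
        ∃ g : Matrix (Fin n ⊕ Unit) (Fin n ⊕ Unit) ℤ,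
          IsUnit g.det ∧ gᵀ * Q * g = Q ∧ g.mulVec y = x)
    (t : ℝ) (ht : 0 < t) :
    (∀ y ∈ F, {g : Matrix (Fin n ⊕ Unit) (Fin n ⊕ Unit) ℤ |
        IsUnit g.det ∧ gᵀ * Q * g = Q ∧ |((g.mulVec y) (Sum.inr ()) : ℝ)| ≤ t}.Finite) ∧
    (Nat.card {x : (Fin n ⊕ Unit) → ℤ |
        x ⬝ᵥ Q.mulVec x = -k ∧ |(x (Sum.inr ()) : ℝ)| ≤ t} : ℚ) =
      ∑ y ∈ F,
        (Nat.card {g : Matrix (Fin n ⊕ Unit) (Fin n ⊕ Unit) ℤ |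
            IsUnit g.det ∧ gᵀ * Q * g = Q ∧ |((g.mulVec y) (Sum.inr ()) : ℝ)| ≤ t} : ℚ) /
        (Nat.card {g : Matrix (Fin n ⊕ Unit) (Fin n ⊕ Unit) ℤ |
            IsUnit g.det ∧ gᵀ * Q * g = Q ∧ g.mulVec y = y} : ℚ) := by
  subst hQ
  set Q : Matrix (Fin n ⊕ Unit) (Fin n ⊕ Unit) ℤ := fromBlocks A 0 0 (of fun _ _ => -a) with hQ
  set X : Set (Fin n ⊕ Unit → ℤ) :=
    {x | x ⬝ᵥ Q *ᵥ x = -k ∧ |(x (Sum.inr ()) : ℝ)| ≤ t}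
  have hX : X.Finite := finite_setOf_fromBlocks_neg_eq hAsymm hApos ha k t
  have hfib (y : Fin n ⊕ Unit → ℤ) {x : Fin n ⊕ Unit → ℤ} (hx : x ⬝ᵥ Q *ᵥ x = -k) :
      {g ∈ integralIsometries Q | g *ᵥ y = x}.Finite :=
    finite_isometries_mulVec_eq (isSymm_fromBlocks_neg hAsymm a) fun v hv =>
      majorant_fromBlocks_neg_pos hAsymm hApos a (by rw [← hQ, hx]; linarith) hv
  have hG (y : Fin n ⊕ Unit → ℤ) : {g ∈ integralIsometries Q | g *ᵥ y ∈ X}.Finite := by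
    refine (hX.biUnion fun x hx => hfib y hx.1).subset ?_
    rintro g ⟨hg, hgy⟩
    exact Set.mem_biUnion hgy ⟨hg, rfl⟩
  have hset (y : Fin n ⊕ Unit → ℤ) (hy : y ∈ F) :
      {g : Matrix (Fin n ⊕ Unit) (Fin n ⊕ Unit) ℤ |
        IsUnit g.det ∧ gᵀ * Q * g = Q ∧ |((g.mulVec y) (Sum.inr ()) : ℝ)| ≤ t} =
      {g ∈ integralIsometries Q | g *ᵥ y ∈ X} := by
    ext g
    constructor
    · rintro ⟨hd, hg, hgt⟩
      exact ⟨⟨hd, hg⟩, (dotProduct_mulVec_of_isometry ⟨hd, hg⟩ y y).trans (hF1 y hy), hgt⟩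
    · rintro ⟨⟨hd, hg⟩, -, hgt⟩
      exact ⟨hd, hg, hgt⟩
  have hstab (y : Fin n ⊕ Unit → ℤ) :
      {g : Matrix (Fin n ⊕ Unit) (Fin n ⊕ Unit) ℤ |
        IsUnit g.det ∧ gᵀ * Q * g = Q ∧ g.mulVec y = y} =
      {g ∈ integralIsometries Q | g *ᵥ y = y} := by
    ext g
    exact and_assoc.symm
  refine ⟨fun y hy => hset y hy ▸ hG y, ?_⟩
  have hpart : X.ncard =
      ∑ y ∈ F, {x ∈ X | ∃ g ∈ integralIsometries Q, g *ᵥ y = x}.ncard := by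
    classical
    rw [Set.ncard_eq_toFinset_card _ hX]
    choose! rep hrep huniq using hF2
    rw [Finset.card_eq_sum_card_fiberwise (f := rep) (t := F)
      fun x hx => (hrep x (hX.mem_toFinset.mp hx).1).1]
    refine Finset.sum_congr rfl fun y hy => ?_
    rw [← Set.ncard_coe_finset]
    congr 1
    ext x
    simp only [Finset.coe_filter, Set.Finite.mem_toFinset, Set.mem_ofPred_eq]
    refine and_congr_right fun hx => ⟨?_, ?_⟩
    · rintro rfl
      obtain ⟨-, g, hd, hg, hgx⟩ := hrep x hx.1
      exact ⟨g, ⟨hd, hg⟩, hgx⟩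
    · rintro ⟨g, ⟨hd, hg⟩, hgx⟩
      exact (huniq x hx.1 y ⟨hy, g, hd, hg, hgx⟩).symm
  rw [Nat.card_coe_set_eq, hpart, Nat.cast_sum]
  refine Finset.sum_congr rfl fun y hy => ?_
  have hne : {g ∈ integralIsometries Q | g *ᵥ y = y}.ncard ≠ 0 :=
    Set.ncard_ne_zero_of_mem (a := 1) ⟨⟨by simp, by simp⟩, one_mulVec y⟩ (hfib y (hF1 y hy))
  rw [hset y hy, hstab, Nat.card_coe_set_eq, Nat.card_coe_set_eq,
    ncard_isometries_mulVec_mem y hX (hG y), Nat.cast_mul,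
    mul_div_cancel_right₀ _ (Nat.cast_ne_zero.mpr hne)]
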